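/- arXiv:2101.12426 — 5 statements merged into one kernel-verified Lean document; each statement's English description precedes it below -/
import Mathlib

section
/- Let n ≥ 1, let ε > 0 and set p = 1/4 + ε. Let C₁, C₂ ⊆ 𝔽₂ⁿ be nonempty codes such that for all (x₁, y₁), (x₂, y₂) ∈ C₁ × C₂ with (x₁, y₁) ≠ (x₂, y₂), the Hamming distance between x₁ ⊕ y₁ and x₂ ⊕ y₂ is strictly greater than 2np. Then |C₁| · |C₂| < 1/(4ε) + 1. -/
/-!
This is the averaging argument behind the Plotkin bound. Over an alphabet of size `q`, in each
coordinate a family of `M` words has at least `M² / q` ordered pairs that agree, by Cauchy–Schwarz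
applied to the sizes of the symbol classes. Hence the distances of all ordered pairs sum to at most
`(1 - 1/q) n M²`. If distinct members of the family are at distance more than `(1 - 1/q + δ) n`,
that sum also exceeds `(1 - 1/q + δ) n M (M - 1)`, so `(M - 1) δ < 1 - 1/q`. The theorem is the case
of the family of sums `x + y`, indexed by the pairs in `C₁ × C₂`, with `q = 2` and `δ = 2ε`.
-/

open Finset

section Plotkin

variable {α ι A : Type*} [Fintype ι] [DecidableEq A]

lemma sum_hammingDist_eq_sum_card_filter_ne (T : Finset (α × α)) (f : α → ι → A) :
    ∑ z ∈ T, hammingDist (f z.1) (f z.2) = ∑ i, #{z ∈ T | f z.1 i ≠ f z.2 i} := by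
  simp only [hammingDist, card_filter]
  exact sum_comm

lemma lt_sum_product_hammingDist {S : Finset α} (hS : S.Nontrivial) (f : α → ι → A) {d : ℝ}
    (hd : (S : Set α).Pairwise fun x y ↦ d < hammingDist (f x) (f y)) :
    #S * (#S - 1) * d < ∑ z ∈ S ×ˢ S, (hammingDist (f z.1) (f z.2) : ℝ) := by
  classical
  calc #S * (#S - 1) * d = ∑ _z ∈ S.offDiag, d := by
        rw [sum_const, offDiag_card, nsmul_eq_mul, Nat.cast_sub (Nat.le_mul_self _)]
        push_cast
        ring
    _ < ∑ z ∈ S.offDiag, (hammingDist (f z.1) (f z.2) : ℝ) := by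
        obtain ⟨x, hx, y, hy, hxy⟩ := hS
        refine sum_lt_sum_of_nonempty ⟨(x, y), mem_offDiag.2 ⟨hx, hy, hxy⟩⟩ fun z hz ↦ ?_
        obtain ⟨hz₁, hz₂, hne⟩ := mem_offDiag.1 hz
        exact hd hz₁ hz₂ hne
    _ ≤ ∑ z ∈ S ×ˢ S, (hammingDist (f z.1) (f z.2) : ℝ) :=
        sum_le_sum_of_subset_of_nonneg (diag_union_offDiag S ▸ subset_union_right)
          fun _ _ _ ↦ Nat.cast_nonneg _

variable [Fintype A]

lemma card_filter_product_eq_sum_sq_card_fiber (S : Finset α) (g : α → A) :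
    #{z ∈ S ×ˢ S | g z.1 = g z.2} = ∑ a, #{x ∈ S | g x = a} ^ 2 := by
  rw [card_eq_sum_card_fiberwise (f := fun z ↦ g z.1) (t := univ) fun _ _ ↦ mem_univ _]
  refine sum_congr rfl fun a _ ↦ ?_
  rw [sq, ← card_product]
  congr 1
  ext z
  simp only [mem_filter, mem_product]
  grind

lemma sq_card_le_card_mul_card_filter_product_eq (S : Finset α) (g : α → A) :
    #S ^ 2 ≤ Fintype.card A * #{z ∈ S ×ˢ S | g z.1 = g z.2} :=
  calc #S ^ 2 = (∑ a, #{x ∈ S | g x = a}) ^ 2 := by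
        rw [← card_eq_sum_card_fiberwise fun _ _ ↦ mem_univ _]
    _ ≤ Fintype.card A * ∑ a, #{x ∈ S | g x = a} ^ 2 := sq_sum_le_card_mul_sum_sq
    _ = Fintype.card A * #{z ∈ S ×ˢ S | g z.1 = g z.2} := by
        rw [card_filter_product_eq_sum_sq_card_fiber]

lemma card_filter_product_ne_le (S : Finset α) (g : α → A) :
    (#{z ∈ S ×ˢ S | g z.1 ≠ g z.2} : ℝ) ≤ (1 - 1 / Fintype.card A) * (#S : ℝ) ^ 2 := by
  have h_eq : (#S : ℝ) ^ 2 / Fintype.card A ≤ #{z ∈ S ×ˢ S | g z.1 = g z.2} :=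
    div_le_of_le_mul₀ (by positivity) (by positivity) <| by
      rw [mul_comm]
      exact_mod_cast sq_card_le_card_mul_card_filter_product_eq S g
  have h_add : (#{z ∈ S ×ˢ S | g z.1 = g z.2} : ℝ) + #{z ∈ S ×ˢ S | g z.1 ≠ g z.2}
      = (#S : ℝ) ^ 2 := by
    rw [sq]
    exact_mod_cast (card_filter_add_card_filter_not _).trans (card_product S S)
  linear_combination h_eq + h_add

lemma sum_product_hammingDist_le (S : Finset α) (f : α → ι → A) :
    ∑ z ∈ S ×ˢ S, (hammingDist (f z.1) (f z.2) : ℝ)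
      ≤ (1 - 1 / Fintype.card A) * Fintype.card ι * (#S : ℝ) ^ 2 :=
  calc ∑ z ∈ S ×ˢ S, (hammingDist (f z.1) (f z.2) : ℝ)
      = ∑ i, (#{z ∈ S ×ˢ S | f z.1 i ≠ f z.2 i} : ℝ) := by
        exact_mod_cast sum_hammingDist_eq_sum_card_filter_ne (S ×ˢ S) f
    _ ≤ ∑ _i : ι, (1 - 1 / Fintype.card A) * (#S : ℝ) ^ 2 :=
        sum_le_sum fun i _ ↦ card_filter_product_ne_le S (f · i)
    _ = (1 - 1 / Fintype.card A) * Fintype.card ι * (#S : ℝ) ^ 2 := by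
        rw [sum_const, card_univ, nsmul_eq_mul]
        ring

theorem card_lt_of_pairwise_lt_hammingDist [Nontrivial A] (S : Finset α) (f : α → ι → A) {δ : ℝ}
    (hδ : 0 < δ) (hd : (S : Set α).Pairwise fun x y ↦
      (1 - 1 / Fintype.card A + δ) * Fintype.card ι < hammingDist (f x) (f y)) :
    (#S : ℝ) < (1 - 1 / Fintype.card A) / δ + 1 := by
  set θ : ℝ := 1 - 1 / Fintype.card A
  have hθ : 0 < θ :=
    sub_pos.2 <| (div_lt_one (by positivity)).2 <| mod_cast Fintype.one_lt_card
  rcases le_or_gt #S 1 with h_one | h_one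
  · have : (#S : ℝ) ≤ 1 := mod_cast h_one
    have : 0 < θ / δ := div_pos hθ hδ
    linarith
  have h_double_count : #S * (#S - 1) * ((θ + δ) * Fintype.card ι)
      < θ * Fintype.card ι * (#S : ℝ) ^ 2 :=
    (lt_sum_product_hammingDist (one_lt_card_iff_nontrivial.1 h_one) f hd).trans_le
      (sum_product_hammingDist_le S f)
  have h_cancel : (#S - 1) * (θ + δ) < θ * #S :=
    lt_of_mul_lt_mul_left (a := (Fintype.card ι * #S : ℝ))
      (by linear_combination h_double_count) (by positivity)
  rw [← sub_lt_iff_lt_add, lt_div_iff₀ hδ]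
  linear_combination h_cancel

end Plotkin

theorem stmt_0_general {ι A : Type*} [Fintype ι] [Fintype A] [DecidableEq A] [Nontrivial A] [Add A]
    {ε p : ℝ} (hε : 0 < ε) (hp : p = (1 - 1 / Fintype.card A) / 2 + ε) (C₁ C₂ : Finset (ι → A))
    (hzero : ∀ x₁ ∈ C₁, ∀ y₁ ∈ C₂, ∀ x₂ ∈ C₁, ∀ y₂ ∈ C₂, (x₁, y₁) ≠ (x₂, y₂) →
      2 * Fintype.card ι * p < hammingDist (x₁ + y₁) (x₂ + y₂)) :
    (#C₁ : ℝ) * #C₂ < (1 - 1 / Fintype.card A) / (2 * ε) + 1 := by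
  rw [← Nat.cast_mul, ← card_product]
  refine card_lt_of_pairwise_lt_hammingDist (C₁ ×ˢ C₂) (fun z ↦ z.1 + z.2) (by positivity) ?_
  intro z hz w hw hne
  obtain ⟨hz₁, hz₂⟩ := mem_product.1 hz
  obtain ⟨hw₁, hw₂⟩ := mem_product.1 hw
  have h_dist := hzero z.1 hz₁ z.2 hz₂ w.1 hw₁ w.2 hw₂ hne
  rw [hp] at h_dist
  linear_combination h_dist

theorem stmt_0 (n : ℕ) (hn : 1 ≤ n) (ε p : ℝ) (hε : 0 < ε) (hp : p = 1 / 4 + ε)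
    (C₁ C₂ : Finset (Fin n → ZMod 2)) (hC₁ : C₁.Nonempty) (hC₂ : C₂.Nonempty)
    (hzero : ∀ x₁ ∈ C₁, ∀ y₁ ∈ C₂, ∀ x₂ ∈ C₁, ∀ y₂ ∈ C₂, (x₁, y₁) ≠ (x₂, y₂) →
      2 * (n : ℝ) * p < (hammingDist (x₁ + y₁) (x₂ + y₂) : ℝ)) :
    (C₁.card : ℝ) * (C₂.card : ℝ) < 1 / (4 * ε) + 1 := by
  have h_general := stmt_0_general (p := p) hε (by rw [hp, ZMod.card]; norm_num) C₁ C₂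
    (by simpa only [Fintype.card_fin] using hzero)
  convert h_general using 2
  rw [ZMod.card]; field_simp; norm_num
end

section
/- Let X₁, X₂ be finite sets, let G := conv{ P^{⊗2}⊗Q^{⊗2} : P ∈ Δ(X₁), Q ∈ Δ(X₂) } ⊆ Δ(X₁²×X₂²), and let D̄ ∈ Δ(X₁²×X₂²) satisfy d₁(D̄, D) ≥ γ for every D ∈ G, where γ > 0. Then there exists a tensor T : X₁²×X₂² → ℝ with ‖T‖_∞ ≤ 2 such that ⟨P^{⊗2}⊗Q^{⊗2}, T⟩ ≥ 0 for all P ∈ Δ(X₁), Q ∈ Δ(X₂), and ⟨D̄, T⟩ ≤ −γ. -/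
/-- `P` is a probability distribution on the finite set `X`. -/
def IsDist {X : Type*} [Fintype X] (P : X → ℝ) : Prop :=
  (∀ x, 0 ≤ P x) ∧ ∑ x, P x = 1

/-- The convex hull of the products `P^{⊗2} ⊗ Q^{⊗2}` with `P ∈ Δ(X₁)`, `Q ∈ Δ(X₂)`,
realized as the set of all finite mixtures of such products. -/
def goodSet (X₁ X₂ : Type*) [Fintype X₁] [Fintype X₂] : Set (X₁ × X₁ × X₂ × X₂ → ℝ) :=
  {D | ∃ (k : ℕ) (_ : 1 ≤ k) (lam : Fin k → ℝ) (P : Fin k → X₁ → ℝ) (Q : Fin k → X₂ → ℝ),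
    (∀ i, 0 ≤ lam i) ∧ (∑ i, lam i = 1) ∧ (∀ i, IsDist (P i)) ∧ (∀ i, IsDist (Q i)) ∧
    D = fun z => ∑ i, lam i * P i z.1 * P i z.2.1 * Q i z.2.2.1 * Q i z.2.2.2}

/-!
Let `f` separate the open `ℓ¹`-ball of radius `γ` about `D̄` from the good distributions by a
threshold `u`. The supremum of `f` over that ball is `f D̄ + γ‖f‖`, so after normalisation
`f D̄ + γ ≤ u`. The dual of `ℓ¹` being `ℓ^∞`, `f` is a tensor `c` with `‖c‖_∞ ≤ 1`, and since all
distributions involved have total mass one, subtracting `u`, truncated to `[-1, 1]`, from `c` moves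
the threshold to `0`.
-/

open Metric WithLp

section Separation

variable {E : Type*} [NormedAddCommGroup E] [NormedSpace ℝ E]

theorem apply_add_mul_norm_le_of_forall_mem_ball {f : StrongDual ℝ E} {x : E} {r u : ℝ}
    (hr : 0 < r) (hf : ∀ y ∈ ball x r, f y ≤ u) : f x + r * ‖f‖ ≤ u := by
  have hf_closed : ∀ y ∈ closedBall x r, f y ≤ u := by
    rw [← closure_ball x hr.ne']
    exact fun y hy ↦ closure_minimal hf (isClosed_le f.continuous continuous_const) hy
  have hf_zero : ∀ v ∈ closedBall (0 : E) r, ‖f v‖ ≤ u - f x := by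
    intro v hv
    rw [mem_closedBall_zero_iff] at hv
    have hadd := hf_closed (x + v) (by simpa using hv)
    have hsub := hf_closed (x - v) (by simpa using hv)
    rw [map_add] at hadd
    rw [map_sub] at hsub
    exact abs_le.2 ⟨by linarith, by linarith⟩
  have hnorm := (le_div_iff₀ hr).1 (f.opNorm_bound_of_ball_bound hr _ hf_zero)
  linarith

theorem exists_norm_le_one_add_le_of_forall_le_dist {K : Set E} (hK : Convex ℝ K) {x : E} {γ : ℝ}
    (hfar : ∀ y ∈ K, γ ≤ dist x y) :
    ∃ (f : StrongDual ℝ E) (u : ℝ), ‖f‖ ≤ 1 ∧ f x + γ ≤ u ∧ ∀ y ∈ K, u ≤ f y := by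
  rcases le_or_gt γ 0 with hγ | hγ
  · exact ⟨0, 0, by simp, by simpa using hγ, by simp⟩
  rcases K.eq_empty_or_nonempty with rfl | ⟨y₀, hy₀⟩
  · exact ⟨0, γ, by simp, by simp, by simp⟩
  have hdisj : Disjoint (ball x γ) K :=
    Set.disjoint_right.2 fun y hy hball ↦ (hfar y hy).not_gt (mem_ball'.1 hball)
  obtain ⟨g, u, hball, hgK⟩ :=
    geometric_hahn_banach_open (convex_ball x γ) isOpen_ball hK hdisj
  have hg : 0 < ‖g‖ := by
    refine norm_pos_iff.2 fun hg₀ ↦ ?_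
    have hlt : g x < g y₀ := (hball x (mem_ball_self hγ)).trans_le (hgK y₀ hy₀)
    simp [hg₀] at hlt
  have hgx := apply_add_mul_norm_le_of_forall_mem_ball hγ fun y hy ↦ (hball y hy).le
  refine ⟨‖g‖⁻¹ • g, ‖g‖⁻¹ * u, ?_, ?_, fun y hy ↦ ?_⟩
  · rw [norm_smul, norm_inv, norm_norm, inv_mul_cancel₀ hg.ne']
  · calc ‖g‖⁻¹ * g x + γ = ‖g‖⁻¹ * (g x + γ * ‖g‖) := by field_simp
      _ ≤ ‖g‖⁻¹ * u := by gcongr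
  · exact mul_le_mul_of_nonneg_left (hgK y hy) (inv_nonneg.2 hg.le)

end Separation

section FiniteType

variable {Z : Type*} [Fintype Z]

theorem exists_abs_le_one_apply_toLp_eq_dotProduct {f : StrongDual ℝ (PiLp 1 fun _ : Z ↦ ℝ)}
    (hf : ‖f‖ ≤ 1) : ∃ c : Z → ℝ, (∀ z, |c z| ≤ 1) ∧ ∀ D : Z → ℝ, f (toLp 1 D) = D ⬝ᵥ c := by
  classical
  refine ⟨fun z ↦ f (toLp 1 (Pi.single z 1)), fun z ↦ ?_, fun D ↦ ?_⟩
  · simpa using f.le_of_opNorm_le hf (toLp 1 (Pi.single z 1))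
  · conv_lhs => rw [pi_eq_sum_univ' D]
    simp [dotProduct, toLp_sum]

theorem exists_abs_le_one_dotProduct_add_le {K : Set (Z → ℝ)} (hK : Convex ℝ K) {D₀ : Z → ℝ}
    {γ : ℝ} (hfar : ∀ D ∈ K, γ ≤ ∑ z, |D₀ z - D z|) :
    ∃ (c : Z → ℝ) (u : ℝ), (∀ z, |c z| ≤ 1) ∧ D₀ ⬝ᵥ c + γ ≤ u ∧ ∀ D ∈ K, u ≤ D ⬝ᵥ c := by
  have hK' : Convex ℝ ((ofLp : PiLp 1 (fun _ : Z ↦ ℝ) → Z → ℝ) ⁻¹' K) :=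
    hK.linear_preimage (WithLp.linearEquiv 1 ℝ (Z → ℝ)).toLinearMap
  obtain ⟨f, u, hf, hD₀, hfK⟩ := exists_norm_le_one_add_le_of_forall_le_dist hK'
    (x := toLp 1 D₀) (γ := γ) fun D hD ↦ by
      simpa [PiLp.dist_eq_of_L1, Real.dist_eq] using hfar _ hD
  obtain ⟨c, hc, hfc⟩ := exists_abs_le_one_apply_toLp_eq_dotProduct hf
  exact ⟨c, u, hc, hfc D₀ ▸ hD₀, fun D hD ↦ hfc D ▸ hfK (toLp 1 D) hD⟩

theorem dotProduct_le_of_mem_stdSimplex {D c : Z → ℝ} {M : ℝ} (hD : D ∈ stdSimplex ℝ Z)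
    (hc : ∀ z, c z ≤ M) : D ⬝ᵥ c ≤ M :=
  calc D ⬝ᵥ c ≤ ∑ z, D z * M :=
        Finset.sum_le_sum fun z _ ↦ mul_le_mul_of_nonneg_left (hc z) (hD.1 z)
    _ = M := by rw [← Finset.sum_mul, hD.2, one_mul]

theorem dotProduct_sub_const_of_sum_eq_one {D : Z → ℝ} (hD : ∑ z, D z = 1) (c : Z → ℝ) (a : ℝ) :
    D ⬝ᵥ (fun z ↦ c z - a) = D ⬝ᵥ c - a := by
  simp only [dotProduct, mul_sub, Finset.sum_sub_distrib, ← Finset.sum_mul, hD, one_mul]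

theorem stmt_9_general {K : Set (Z → ℝ)} (hK : Convex ℝ K) (hK_ne : K.Nonempty)
    (hK_sub : K ⊆ stdSimplex ℝ Z) {γ : ℝ} {D₀ : Z → ℝ} (hD₀ : ∑ z, D₀ z = 1)
    (hfar : ∀ D ∈ K, γ ≤ ∑ z, |D₀ z - D z|) :
    ∃ T : Z → ℝ, (∀ z, |T z| ≤ 2) ∧ (∀ D ∈ K, 0 ≤ D ⬝ᵥ T) ∧ D₀ ⬝ᵥ T ≤ -γ := by
  obtain ⟨c, u, hc, hcD₀, hcK⟩ := exists_abs_le_one_dotProduct_add_le hK hfar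
  obtain ⟨D₁, hD₁⟩ := hK_ne
  have hc_bounds : ∀ z, -1 ≤ c z ∧ c z ≤ 1 := fun z ↦ abs_le.1 (hc z)
  have hu : u ≤ 1 :=
    (hcK D₁ hD₁).trans (dotProduct_le_of_mem_stdSimplex (hK_sub hD₁) fun z ↦ (hc_bounds z).2)
  -- As `D₀` may be signed, `u` may lie below `-1`; the truncated threshold still separates.
  set v := max u (-1)
  have hv : -1 ≤ v ∧ v ≤ 1 := ⟨le_max_right _ _, max_le hu (by norm_num)⟩
  have hvK : ∀ D ∈ K, v ≤ D ⬝ᵥ c := by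
    intro D hD
    have hneg : D ⬝ᵥ (-c) ≤ 1 :=
      dotProduct_le_of_mem_stdSimplex (hK_sub hD) fun z ↦ neg_le.1 (hc_bounds z).1
    rw [dotProduct_neg] at hneg
    exact max_le (hcK D hD) (neg_le.1 hneg)
  refine ⟨fun z ↦ c z - v, fun z ↦ ?_, fun D hD ↦ ?_, ?_⟩
  · have hz := hc_bounds z
    exact abs_le.2 ⟨by linarith, by linarith⟩
  · rw [dotProduct_sub_const_of_sum_eq_one (hK_sub hD).2]
    exact sub_nonneg.2 (hvK D hD)
  · rw [dotProduct_sub_const_of_sum_eq_one hD₀]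
    linarith [le_max_left u (-1)]

end FiniteType

section GoodSet

variable {X₁ X₂ : Type*}

/-- The tensor `P^{⊗2} ⊗ Q^{⊗2}`, on the right-nested product used in `goodSet`. -/
def tensorSquares (P : X₁ → ℝ) (Q : X₂ → ℝ) : X₁ × X₁ × X₂ × X₂ → ℝ :=
  fun z ↦ P z.1 * P z.2.1 * Q z.2.2.1 * Q z.2.2.2

variable [Fintype X₁] [Fintype X₂]

theorem tensorSquares_mem_stdSimplex {P : X₁ → ℝ} {Q : X₂ → ℝ} (hP : P ∈ stdSimplex ℝ X₁)
    (hQ : Q ∈ stdSimplex ℝ X₂) : tensorSquares P Q ∈ stdSimplex ℝ (X₁ × X₁ × X₂ × X₂) := by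
  refine ⟨fun z ↦ ?_, ?_⟩
  · exact mul_nonneg (mul_nonneg (mul_nonneg (hP.1 _) (hP.1 _)) (hQ.1 _)) (hQ.1 _)
  · simp only [tensorSquares, Fintype.sum_prod_type, ← Finset.mul_sum, hP.2, hQ.2, mul_one]

variable (X₁ X₂)

theorem goodSet_eq_convexHull : goodSet X₁ X₂ =
    convexHull ℝ (Set.image2 tensorSquares (stdSimplex ℝ X₁) (stdSimplex ℝ X₂)) := by
  ext D
  constructor
  · rintro ⟨k, -, w, P, Q, hw_nonneg, hw_sum, hP, hQ, rfl⟩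
    refine mem_convexHull_of_exists_fintype w (fun i ↦ tensorSquares (P i) (Q i)) hw_nonneg hw_sum
      (fun i ↦ Set.mem_image2_of_mem (hP i) (hQ i)) ?_
    ext z
    simp [tensorSquares, mul_assoc]
  · intro hD
    obtain ⟨ι, _, w, v, hw_nonneg, hw_sum, hv, rfl⟩ := mem_convexHull_iff_exists_fintype.1 hD
    choose P hP Q hQ hv using hv
    have : Nonempty ι :=
      Finset.univ_nonempty_iff.1 (Finset.nonempty_of_sum_ne_zero (hw_sum ▸ one_ne_zero))
    let e := (Fintype.equivFin ι).symm
    refine ⟨Fintype.card ι, Fintype.card_pos, w ∘ e, P ∘ e, Q ∘ e, fun i ↦ hw_nonneg _,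
      (e.sum_comp w).trans hw_sum, fun i ↦ hP _, fun i ↦ hQ _, ?_⟩
    ext z
    rw [← e.sum_comp]
    simp [← hv, tensorSquares, mul_assoc]

theorem convex_goodSet : Convex ℝ (goodSet X₁ X₂) :=
  goodSet_eq_convexHull X₁ X₂ ▸ convex_convexHull ℝ _

theorem goodSet_subset_stdSimplex : goodSet X₁ X₂ ⊆ stdSimplex ℝ (X₁ × X₁ × X₂ × X₂) := by
  rw [goodSet_eq_convexHull]
  refine convexHull_min (Set.image2_subset_iff.2 fun P hP Q hQ ↦ ?_) (convex_stdSimplex ℝ _)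
  exact tensorSquares_mem_stdSimplex hP hQ

variable {X₁ X₂}

theorem tensorSquares_mem_goodSet {P : X₁ → ℝ} {Q : X₂ → ℝ} (hP : IsDist P) (hQ : IsDist Q) :
    tensorSquares P Q ∈ goodSet X₁ X₂ :=
  goodSet_eq_convexHull X₁ X₂ ▸ subset_convexHull ℝ _ (Set.mem_image2_of_mem hP hQ)

theorem goodSet_nonempty [Nonempty X₁] [Nonempty X₂] : (goodSet X₁ X₂).Nonempty := by
  classical
  exact ⟨_, tensorSquares_mem_goodSet (single_mem_stdSimplex ℝ (Classical.arbitrary X₁))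
    (single_mem_stdSimplex ℝ (Classical.arbitrary X₂))⟩

theorem IsDist.nonempty {X : Type*} [Fintype X] {P : X → ℝ} (hP : IsDist P) : Nonempty X :=
  Finset.univ_nonempty_iff.1 (Finset.nonempty_of_sum_ne_zero (hP.2 ▸ one_ne_zero))

end GoodSet

theorem stmt_9 (X₁ X₂ : Type*) [Fintype X₁] [Fintype X₂]
    (γ : ℝ) (hγ : 0 < γ) (Dbar : X₁ × X₁ × X₂ × X₂ → ℝ) (hDbar : IsDist Dbar)
    (hfar : ∀ D ∈ goodSet X₁ X₂, γ ≤ ∑ z, |Dbar z - D z|) :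
    ∃ T : X₁ × X₁ × X₂ × X₂ → ℝ,
      (∀ z, |T z| ≤ 2) ∧
      (∀ (P : X₁ → ℝ) (Q : X₂ → ℝ), IsDist P → IsDist Q →
        0 ≤ ∑ z : X₁ × X₁ × X₂ × X₂, P z.1 * P z.2.1 * Q z.2.2.1 * Q z.2.2.2 * T z) ∧
      ∑ z, Dbar z * T z ≤ -γ := by
  obtain ⟨x₁, -, x₂, -⟩ := hDbar.nonempty
  have : Nonempty X₁ := ⟨x₁⟩
  have : Nonempty X₂ := ⟨x₂⟩
  obtain ⟨T, hT, hgood, hDbarT⟩ := stmt_9_general (convex_goodSet X₁ X₂) goodSet_nonempty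
    (goodSet_subset_stdSimplex X₁ X₂) hDbar.2 hfar
  exact ⟨T, hT, fun P Q hP hQ ↦ hgood _ (tensorSquares_mem_goodSet hP hQ), hDbarT⟩
end

section
/- Let X₁, X₂ be finite sets, n ≥ 1, M₁, M₂ ≥ 1, and let x₁, …, x_{M₁} ∈ X₁ⁿ and y₁, …, y_{M₂} ∈ X₂ⁿ. Let Q : X₁²×X₂² → ℝ be a tensor such that ⟨P^{⊗2}⊗R^{⊗2}, Q⟩ ≥ 0 for every P ∈ Δ(X₁) and R ∈ Δ(X₂). Then Σ_{i₁=1}^{M₁} Σ_{i₂=1}^{M₁} Σ_{j₁=1}^{M₂} Σ_{j₂=1}^{M₂} ⟨τ_{x_{i₁}, x_{i₂}, y_{j₁}, y_{j₂}}, Q⟩ ≥ 0, where the sum runs over all ordered index pairs including repeated indices. -/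
/-- The type (empirical distribution) of a length-`n` vector `v` over alphabet `X`. -/
noncomputable def typeOf {X : Type*} [DecidableEq X] {n : ℕ} (v : Fin n → X) : X → ℝ :=
  fun a => ((Finset.univ.filter (fun j => v j = a)).card : ℝ) / n

/-! Pairing `Q` with a joint type averages `Q` over the `n` columns. In each column, summing `Q`
over all ordered quadruples of codewords, repetitions included, is `M₁² M₂²` times the pairing of
`Q` with the product of the squares of the two empirical column distributions, hence nonnegative. -/

section EmpiricalDistribution

variable {X : Type*} [Fintype X] [DecidableEq X] {n : ℕ}

theorem sum_typeOf_mul (v : Fin n → X) (f : X → ℝ) :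
    ∑ a, typeOf v a * f a = (∑ k, f (v k)) / n := by
  have fiberwise : ∑ k, f (v k) = ∑ a, ((Finset.univ.filter (v · = a)).card : ℝ) * f a := by
    simpa only [Finset.sum_const, nsmul_eq_mul] using (Finset.sum_fiberwise' Finset.univ v f).symm
  simp only [fiberwise, Finset.sum_div, typeOf, div_mul_eq_mul_div]

theorem isDist_typeOf [NeZero n] (v : Fin n → X) : IsDist (typeOf v) := by
  refine ⟨fun _ => div_nonneg (Nat.cast_nonneg _) (Nat.cast_nonneg _), ?_⟩
  simpa [NeZero.ne n] using sum_typeOf_mul v fun _ => 1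

theorem sum_comp_eq_mul_sum_typeOf (v : Fin n → X) (f : X → ℝ) :
    ∑ k, f (v k) = n * ∑ a, typeOf v a * f a := by
  rcases eq_or_ne n 0 with rfl | hn
  · simp
  · rw [sum_typeOf_mul, mul_div_cancel₀ _ (Nat.cast_ne_zero.mpr hn)]

end EmpiricalDistribution

section DoubleCounting

variable {X₁ X₂ : Type*} [Fintype X₁] [DecidableEq X₁] [Fintype X₂] [DecidableEq X₂]
  {n M₁ M₂ : ℕ}

theorem sum_quadruples_eq_mul_sum_typeOf (u : Fin M₁ → X₁) (w : Fin M₂ → X₂)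
    (Q : X₁ × X₁ × X₂ × X₂ → ℝ) :
    ∑ i₁, ∑ i₂, ∑ j₁, ∑ j₂, Q (u i₁, u i₂, w j₁, w j₂) =
      M₁ ^ 2 * M₂ ^ 2 * ∑ z : X₁ × X₁ × X₂ × X₂,
        typeOf u z.1 * typeOf u z.2.1 * typeOf w z.2.2.1 * typeOf w z.2.2.2 * Q z := by
  calc
    _ = M₁ * ∑ a₁, typeOf u a₁ * (M₁ * ∑ a₂, typeOf u a₂ *
          (M₂ * ∑ b₁, typeOf w b₁ * (M₂ * ∑ b₂, typeOf w b₂ * Q (a₁, a₂, b₁, b₂)))) := by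
      simp only [← sum_comp_eq_mul_sum_typeOf]
    _ = _ := by
      simp only [Fintype.sum_prod_type, mul_assoc, mul_left_comm (typeOf _ _) (Nat.cast _),
        ← Finset.mul_sum]
      ring

theorem sum_jointType_eq_mul_sum_columnTypes (x : Fin M₁ → Fin n → X₁) (y : Fin M₂ → Fin n → X₂)
    (Q : X₁ × X₁ × X₂ × X₂ → ℝ) :
    ∑ i₁, ∑ i₂, ∑ j₁, ∑ j₂, ∑ z, typeOf (fun k => (x i₁ k, x i₂ k, y j₁ k, y j₂ k)) z * Q z =
      M₁ ^ 2 * M₂ ^ 2 * ((∑ k, ∑ z : X₁ × X₁ × X₂ × X₂,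
        typeOf (x · k) z.1 * typeOf (x · k) z.2.1 *
          typeOf (y · k) z.2.2.1 * typeOf (y · k) z.2.2.2 * Q z) / n) := by
  calc
    _ = (∑ i₁, ∑ i₂, ∑ j₁, ∑ j₂, ∑ k, Q (x i₁ k, x i₂ k, y j₁ k, y j₂ k)) / n := by
      simp only [sum_typeOf_mul, Finset.sum_div]
    _ = (∑ k, ∑ i₁, ∑ i₂, ∑ j₁, ∑ j₂, Q (x i₁ k, x i₂ k, y j₁ k, y j₂ k)) / n := by
      simp only [Finset.sum_comm (s := (Finset.univ : Finset (Fin n)))]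
    _ = _ := by
      simp only [sum_quadruples_eq_mul_sum_typeOf, ← Finset.mul_sum, mul_div_assoc]

end DoubleCounting

theorem stmt_14 (X₁ X₂ : Type*) [Fintype X₁] [DecidableEq X₁] [Fintype X₂] [DecidableEq X₂]
    (n M₁ M₂ : ℕ) (hn : 1 ≤ n) (hM₁ : 1 ≤ M₁) (hM₂ : 1 ≤ M₂)
    (x : Fin M₁ → Fin n → X₁) (y : Fin M₂ → Fin n → X₂)
    (Q : X₁ × X₁ × X₂ × X₂ → ℝ)
    (hQ : ∀ (P : X₁ → ℝ) (R : X₂ → ℝ), IsDist P → IsDist R →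
      0 ≤ ∑ z : X₁ × X₁ × X₂ × X₂, P z.1 * P z.2.1 * R z.2.2.1 * R z.2.2.2 * Q z) :
    0 ≤ ∑ i₁ : Fin M₁, ∑ i₂ : Fin M₁, ∑ j₁ : Fin M₂, ∑ j₂ : Fin M₂,
          ∑ z : X₁ × X₁ × X₂ × X₂,
            typeOf (fun k => (x i₁ k, x i₂ k, y j₁ k, y j₂ k)) z * Q z := by
  have : NeZero M₁ := .of_pos hM₁
  have : NeZero M₂ := .of_pos hM₂
  rw [sum_jointType_eq_mul_sum_columnTypes]
  have columns_nonneg := Finset.sum_nonneg fun k (_ : k ∈ Finset.univ) =>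
    hQ (typeOf (x · k)) (typeOf (y · k)) (isDist_typeOf _) (isDist_typeOf _)
  positivity
end

section
/- Let X₁, X₂ be finite sets, η > 0, and N₁, N₂ ≥ 2. Then there exist K₁ and K₂ (depending only on |X₁|, |X₂|, η, N₁, N₂) such that for every n ≥ 1 and every pair of codes C₁ ⊆ X₁ⁿ with |C₁| ≥ K₁ and C₂ ⊆ X₂ⁿ with |C₂| ≥ K₂, there exist pairwise distinct codewords x₁, …, x_{N₁} ∈ C₁ and pairwise distinct codewords y₁, …, y_{N₂} ∈ C₂ and a distribution D ∈ Δ(X₁²×X₂²) such that for all 1 ≤ i₁ < i₂ ≤ N₁ and 1 ≤ j₁ < j₂ ≤ N₂, d_∞(τ_{x_{i₁}, x_{i₂}, y_{j₁}, y_{j₂}}, D) ≤ η. -/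
/-!
Colour a pair of pairs of codewords by an element of a finite `η`-net of the probability simplex
within `η` of its joint type. A monochromatic pair of subcodes has all its joint types within `η`
of one net element.

Such subcodes come from two applications of Ramsey's theorem for pairs: fix `K₁` words of the first
code and colour each pair of words of the second code by the whole table of colours it induces on
pairs of those `K₁` words. In a subcode of the second code that is monochromatic for this colouring,
one table remains, which is a colouring of pairs of the `K₁` words.
-/

open Finset Function

section Ramsey

universe u v

theorem exists_injective_endHomogeneous (κ : Type*) [Finite κ] (M : ℕ) :
    ∃ K : ℕ, ∀ {α : Type u} (c : α → α → κ) (S : Finset α), K ≤ #S →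
      ∃ (x : Fin M → α) (d : Fin M → κ), Injective x ∧ (∀ i, x i ∈ S) ∧
        ∀ i j, i < j → c (x i) (x j) = d i := by
  classical
  have := Fintype.ofFinite κ
  induction M with
  | zero => exact ⟨0, fun _ _ _ => ⟨Fin.elim0, Fin.elim0, injective_of_subsingleton _,
      fun i => i.elim0, fun i => i.elim0⟩⟩
  | succ M ih =>
    obtain ⟨K, hK⟩ := ih
    refine ⟨Fintype.card κ * K + 1, fun c S hS => ?_⟩
    obtain ⟨a, ha⟩ : S.Nonempty := card_pos.mp (by lia)
    have card_le : #(univ : Finset κ) * K ≤ #(S.erase a) := by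
      rw [card_univ, card_erase_of_mem ha]
      lia
    obtain ⟨k, -, hk⟩ := exists_le_card_fiber_of_mul_le_card_of_maps_to (f := c a)
      (fun _ _ => mem_univ _) ⟨c a a, mem_univ _⟩ card_le
    obtain ⟨x, d, x_inj, x_mem, hx⟩ := hK c _ hk
    simp only [mem_filter, mem_erase] at x_mem
    refine ⟨Fin.cons a x, Fin.cons k d, Fin.cons_injective_iff.mpr ⟨?_, x_inj⟩,
      Fin.cases ha fun i => (x_mem i).1.2, ?_⟩
    · rintro ⟨i, rfl⟩
      exact (x_mem i).1.1 rfl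
    · simpa [Fin.forall_fin_succ, (x_mem _).2] using hx

theorem exists_injective_monochromatic (κ : Type*) [Finite κ] (N : ℕ) :
    ∃ K : ℕ, ∀ {α : Type u} (c : α → α → κ) (S : Finset α), K ≤ #S →
      ∃ x : Fin N → α, Injective x ∧ (∀ i, x i ∈ S) ∧
        ∃ k, ∀ i j, i < j → c (x i) (x j) = k := by
  classical
  have := Fintype.ofFinite κ
  rcases isEmpty_or_nonempty κ with _ | _
  · refine ⟨1, fun c S hS => ?_⟩
    obtain ⟨a, -⟩ : S.Nonempty := card_pos.mp hS
    exact isEmptyElim (c a a)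
  · obtain ⟨K, hK⟩ := exists_injective_endHomogeneous κ (Fintype.card κ * N)
    refine ⟨K, fun c S hS => ?_⟩
    obtain ⟨x, d, x_inj, x_mem, hx⟩ := hK c S hS
    obtain ⟨k, hk⟩ := Fintype.exists_le_card_fiber_of_mul_le_card d (Fintype.card_fin _).ge
    let g := orderEmbOfCardLe _ hk
    have d_g (i) : d (g i) = k := (mem_filter.mp (orderEmbOfCardLe_mem _ hk i)).2
    exact ⟨x ∘ g, x_inj.comp g.injective, fun _ => x_mem _, k,
      fun i j hij => (hx _ _ (g.strictMono hij)).trans (d_g i)⟩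

theorem exists_injective_monochromatic_bipartite (κ : Type*) [Finite κ] (N₁ N₂ : ℕ) :
    ∃ K₁ K₂ : ℕ, ∀ {α : Type u} {β : Type v} (c : α → α → β → β → κ) (S : Finset α) (T : Finset β),
      K₁ ≤ #S → K₂ ≤ #T →
        ∃ (x : Fin N₁ → α) (y : Fin N₂ → β), Injective x ∧ Injective y ∧
          (∀ i, x i ∈ S) ∧ (∀ j, y j ∈ T) ∧
          ∃ k, ∀ i₁ i₂, i₁ < i₂ → ∀ j₁ j₂, j₁ < j₂ → c (x i₁) (x i₂) (y j₁) (y j₂) = k := by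
  obtain ⟨K₁, hK₁⟩ := exists_injective_monochromatic κ N₁
  obtain ⟨K₂, hK₂⟩ := exists_injective_monochromatic (Fin K₁ → Fin K₁ → κ) N₂
  refine ⟨K₁, K₂, fun c S T hS hT => ?_⟩
  obtain ⟨e⟩ : Nonempty (Fin K₁ ↪ S) := Embedding.nonempty_of_card_le (by simpa using hS)
  obtain ⟨y, y_inj, y_mem, table, hy⟩ := hK₂ (fun b₁ b₂ p₁ p₂ => c (e p₁) (e p₂) b₁ b₂) T hT
  obtain ⟨g, g_inj, -, k, hg⟩ := hK₁ table univ (card_fin K₁).ge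
  refine ⟨fun i => e (g i), y, Subtype.val_injective.comp (e.injective.comp g_inj), y_inj,
    fun i => (e (g i)).2, y_mem, k, fun i₁ i₂ hi j₁ j₂ hj => ?_⟩
  rw [← hg i₁ i₂ hi, ← hy j₁ j₂ hj]

theorem exists_injective_dist_lt_of_totallyBounded {E : Type*} [PseudoMetricSpace E] {s : Set E}
    (hs : TotallyBounded s) {ε : ℝ} (hε : 0 < ε) (N₁ N₂ : ℕ) :
    ∃ K₁ K₂ : ℕ, ∀ {α : Type u} {β : Type v} (f : α → α → β → β → E) (S : Finset α) (T : Finset β),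
      (∀ a₁ a₂ b₁ b₂, f a₁ a₂ b₁ b₂ ∈ s) → K₁ ≤ #S → K₂ ≤ #T →
        ∃ (x : Fin N₁ → α) (y : Fin N₂ → β), Injective x ∧ Injective y ∧
          (∀ i, x i ∈ S) ∧ (∀ j, y j ∈ T) ∧
          ∃ p ∈ s, ∀ i₁ i₂, i₁ < i₂ → ∀ j₁ j₂, j₁ < j₂ →
            dist (f (x i₁) (x i₂) (y j₁) (y j₂)) p < ε := by
  obtain ⟨net, net_sub, net_fin, s_cover⟩ := Metric.finite_approx_of_totallyBounded hs ε hε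
  have := net_fin.to_subtype
  obtain ⟨K₁, K₂, hK⟩ := exists_injective_monochromatic_bipartite net N₁ N₂
  refine ⟨K₁, K₂, fun f S T hf hS hT => ?_⟩
  have exists_near (a₁ a₂ b₁ b₂) : ∃ p : net, dist (f a₁ a₂ b₁ b₂) p < ε := by
    simpa using s_cover (hf a₁ a₂ b₁ b₂)
  choose c hc using exists_near
  obtain ⟨x, y, x_inj, y_inj, x_mem, y_mem, p, hp⟩ := hK c S T hS hT
  refine ⟨x, y, x_inj, y_inj, x_mem, y_mem, p, net_sub p.2, fun i₁ i₂ hi j₁ j₂ hj => ?_⟩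
  rw [← hp i₁ i₂ hi j₁ j₂ hj]
  exact hc ..

end Ramsey

theorem typeOf_mem_stdSimplex {X : Type*} [Fintype X] [DecidableEq X] {n : ℕ} (hn : n ≠ 0)
    (v : Fin n → X) : typeOf v ∈ stdSimplex ℝ X := by
  refine ⟨fun a => by unfold typeOf; positivity, ?_⟩
  calc ∑ a, typeOf v a = ((∑ a, #{j | v j = a} : ℕ) : ℝ) / n := by
        simp only [typeOf, sum_div, Nat.cast_sum]
    _ = n / n := by
        rw [← card_eq_sum_card_fiberwise fun _ _ => mem_univ _, card_fin]
    _ = 1 := div_self (Nat.cast_ne_zero.mpr hn)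

theorem stmt_17 (X₁ X₂ : Type*) [Fintype X₁] [DecidableEq X₁] [Fintype X₂] [DecidableEq X₂]
    (η : ℝ) (hη : 0 < η) (N₁ N₂ : ℕ) (hN₁ : 2 ≤ N₁) (hN₂ : 2 ≤ N₂) :
    ∃ K₁ K₂ : ℕ, ∀ n : ℕ, 1 ≤ n →
      ∀ (C₁ : Finset (Fin n → X₁)) (C₂ : Finset (Fin n → X₂)),
        K₁ ≤ C₁.card → K₂ ≤ C₂.card →
        ∃ (x : Fin N₁ → Fin n → X₁) (y : Fin N₂ → Fin n → X₂),
          Function.Injective x ∧ Function.Injective y ∧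
          (∀ i, x i ∈ C₁) ∧ (∀ j, y j ∈ C₂) ∧
          ∃ D : X₁ × X₁ × X₂ × X₂ → ℝ, IsDist D ∧
            ∀ i₁ i₂ : Fin N₁, i₁ < i₂ → ∀ j₁ j₂ : Fin N₂, j₁ < j₂ →
              ∀ z, |typeOf (fun k => (x i₁ k, x i₂ k, y j₁ k, y j₂ k)) z - D z| ≤ η := by
  obtain ⟨K₁, K₂, hK⟩ := exists_injective_dist_lt_of_totallyBounded
    (isCompact_stdSimplex ℝ (X₁ × X₁ × X₂ × X₂)).totallyBounded hη N₁ N₂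
  refine ⟨K₁, K₂, fun n hn C₁ C₂ hC₁ hC₂ => ?_⟩
  obtain ⟨x, y, x_inj, y_inj, x_mem, y_mem, D, D_mem, hD⟩ :=
    hK (fun u₁ u₂ v₁ v₂ => typeOf fun k => (u₁ k, u₂ k, v₁ k, v₂ k)) C₁ C₂
      (fun _ _ _ _ => typeOf_mem_stdSimplex (by lia) _) hC₁ hC₂
  exact ⟨x, y, x_inj, y_inj, x_mem, y_mem, D, D_mem, fun i₁ i₂ hi j₁ j₂ hj z =>
    (dist_le_pi_dist _ D z).trans (hD i₁ i₂ hi j₁ j₂ hj).le⟩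
end

section
/- Let X₁, X₂ be finite sets, let P₁ ∈ Δ(X₁) and P₂ ∈ Δ(X₂), and let K₁₂ ⊆ Δ(X₁²×X₂²), K₁ ⊆ Δ(X₁²×X₂), K₂ ⊆ Δ(X₁×X₂²) be sets of distributions such that d_∞(P₁^{⊗2}⊗P₂^{⊗2}, D) ≥ ρ₁₂ for all D ∈ K₁₂, d_∞(P₁^{⊗2}⊗P₂, D) ≥ ρ₁ for all D ∈ K₁, and d_∞(P₁⊗P₂^{⊗2}, D) ≥ ρ₂ for all D ∈ K₂, where ρ₁₂, ρ₁, ρ₂ > 0. Then there exist constants R₁ > 0, R₂ > 0 and n₀ (depending only on |X₁|, |X₂|, ρ₁₂, ρ₁, ρ₂) such that for every n ≥ n₀ there exist codewords x₁, …, x_{M₁} ∈ X₁ⁿ and y₁, …, y_{M₂} ∈ X₂ⁿ with M₁ ≥ 2^{R₁ n} and M₂ ≥ 2^{R₂ n}, satisfying: for all i₁ ≠ i₂ and j₁ ≠ j₂, τ_{x_{i₁}, x_{i₂}, y_{j₁}, y_{j₂}} ∉ K₁₂; for all i₁ ≠ i₂ and all j, τ_{x_{i₁}, x_{i₂}, y_j}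 ∉ K₁; and for all i and all j₁ ≠ j₂, τ_{x_i, y_{j₁}, y_{j₂}} ∉ K₂. -/
/-! Draw the letter columns `((xᵢ(k))ᵢ, (yⱼ(k))ⱼ)`, `k < n`, independently from `P₁^ι ⊗ P₂^κ`.
Each value of a joint type of codewords is the empirical frequency of one event on columns. By
Hoeffding it deviates from the probability of that event by `ρ` or more with probability at most
`2 exp (-2nρ²)`. With `M` codewords on each side there are only `O(M⁴)` events, so for `M` growing
exponentially slowly enough some draw makes every frequency accurate. The probabilities of the
events are the values of the product distributions, which stay `ρ`-away from the confusable sets. -/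

section Concentration

open MeasureTheory ProbabilityTheory Real Set

variable {Ω : Type*} [MeasurableSpace Ω] {μ : Measure Ω}

theorem measureReal_le_abs_le_of_hasSubgaussianMGF [IsFiniteMeasure μ] {X : Ω → ℝ} {c : NNReal}
    (hX : HasSubgaussianMGF X c μ) {ε : ℝ} (hε : 0 ≤ ε) :
    μ.real {ω | ε ≤ |X ω|} ≤ 2 * exp (-ε ^ 2 / (2 * c)) := by
  have hunion : {ω | ε ≤ |X ω|} = {ω | ε ≤ X ω} ∪ {ω | ε ≤ (-X) ω} := by
    ext ω
    simp only [mem_ofPred_eq, mem_union, le_abs, Pi.neg_apply]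
  calc μ.real {ω | ε ≤ |X ω|}
      ≤ μ.real {ω | ε ≤ X ω} + μ.real {ω | ε ≤ (-X) ω} := hunion ▸ measureReal_union_le _ _
    _ ≤ exp (-ε ^ 2 / (2 * c)) + exp (-ε ^ 2 / (2 * c)) :=
        add_le_add (hX.measure_ge_le hε) (hX.neg.measure_ge_le hε)
    _ = 2 * exp (-ε ^ 2 / (2 * c)) := (two_mul _).symm

theorem measureReal_le_abs_sum_sub_integral_le [IsProbabilityMeasure μ] {ι : Type*}
    {X : ι → Ω → ℝ} (hindep : iIndepFun X μ) {s : Finset ι} {a b : ι → ℝ}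
    (hmeas : ∀ i ∈ s, AEMeasurable (X i) μ) (hmem : ∀ i ∈ s, ∀ᵐ ω ∂μ, X i ω ∈ Icc (a i) (b i))
    {ε : ℝ} (hε : 0 ≤ ε) :
    μ.real {ω | ε ≤ |∑ i ∈ s, (X i ω - μ[X i])|} ≤
      2 * exp (-(2 * ε ^ 2 / ∑ i ∈ s, (b i - a i) ^ 2)) := by
  have hcentered : iIndepFun (fun i ω ↦ X i ω - μ[X i]) μ :=
    hindep.comp (fun i (x : ℝ) ↦ x - ∫ ω, X i ω ∂μ) fun i ↦ measurable_id.sub_const _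
  have hsum := HasSubgaussianMGF.sum_of_iIndepFun hcentered fun i hi ↦
    hasSubgaussianMGF_of_mem_Icc (hmeas i hi) (hmem i hi)
  convert! measureReal_le_abs_le_of_hasSubgaussianMGF hsum hε using 3
  have hparam : ∑ i ∈ s, (|b i - a i| / 2) ^ 2 = (∑ i ∈ s, (b i - a i) ^ 2) / 4 := by
    simp only [div_pow, sq_abs, Finset.sum_div]
    norm_num
  push_cast
  simp only [norm_eq_abs, hparam]
  ring

theorem measureReal_pi_le_abs_sum_sub_mul_integral_le [IsProbabilityMeasure μ] {f : Ω → ℝ}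
    {a b : ℝ} (hmeas : AEMeasurable f μ) (hmem : ∀ᵐ ω ∂μ, f ω ∈ Icc a b) (n : ℕ) {ρ : ℝ}
    (hρ : 0 ≤ ρ) :
    (Measure.pi fun _ : Fin n ↦ μ).real {c | n * ρ ≤ |∑ k, f (c k) - n * μ[f]|} ≤
      2 * exp (-(2 * ρ ^ 2 * n / (b - a) ^ 2)) := by
  let ν : Measure (Fin n → Ω) := Measure.pi fun _ ↦ μ
  have heval (k : Fin n) : Measure.QuasiMeasurePreserving (Function.eval k) ν μ :=
    (measurePreserving_eval (fun _ ↦ μ) k).quasiMeasurePreserving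
  have hmean (k : Fin n) : ν[fun c ↦ f (c k)] = μ[f] :=
    integral_comp_eval hmeas.aestronglyMeasurable
  have hcentered (c : Fin n → Ω) : ∑ k, f (c k) - n * μ[f] =
      ∑ k, (f (c k) - ν[fun c ↦ f (c k)]) := by
    simp only [hmean, Finset.sum_sub_distrib, Finset.sum_const, Finset.card_univ,
      Fintype.card_fin, nsmul_eq_mul]
  have hindep : iIndepFun (fun k c ↦ f (c k)) ν := iIndepFun_pi fun _ ↦ hmeas
  have hexponent :
      2 * ρ ^ 2 * n / (b - a) ^ 2 = 2 * (n * ρ) ^ 2 / ∑ _k : Fin n, (b - a) ^ 2 := by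
    rw [Finset.sum_const, Finset.card_univ, Fintype.card_fin, nsmul_eq_mul]
    rcases eq_or_ne (n : ℝ) 0 with hn | hn
    · simp [hn]
    · rw [← mul_div_mul_left _ _ hn]
      ring
  simp only [hcentered, hexponent]
  exact measureReal_le_abs_sum_sub_integral_le hindep
    (fun k _ ↦ hmeas.comp_quasiMeasurePreserving (heval k)) (fun k _ ↦ (heval k).ae hmem)
    (by positivity)

theorem exists_forall_abs_sum_sub_mul_integral_lt (μ : Measure Ω) [IsProbabilityMeasure μ]
    {T : Type*} [Fintype T] {f : T → Ω → ℝ} {a b : ℝ} (hmeas : ∀ t, AEMeasurable (f t) μ)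
    (hmem : ∀ t, ∀ᵐ ω ∂μ, f t ω ∈ Icc a b) {n : ℕ} {ρ : ℝ} (hρ : 0 ≤ ρ)
    (hcard : Fintype.card T * (2 * exp (-(2 * ρ ^ 2 * n / (b - a) ^ 2))) < 1) :
    ∃ c : Fin n → Ω, ∀ t, |∑ k, f t (c k) - n * μ[f t]| < n * ρ := by
  let ν : Measure (Fin n → Ω) := Measure.pi fun _ ↦ μ
  let bad (t : T) : Set (Fin n → Ω) := {c | n * ρ ≤ |∑ k, f t (c k) - n * μ[f t]|}
  have hbad (t : T) : ν.real (bad t) ≤ 2 * exp (-(2 * ρ ^ 2 * n / (b - a) ^ 2)) :=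
    measureReal_pi_le_abs_sum_sub_mul_integral_le (hmeas t) (hmem t) n hρ
  have hunion : ν.real (⋃ t, bad t) < 1 :=
    calc ν.real (⋃ t, bad t) ≤ ∑ t, ν.real (bad t) := measureReal_iUnion_fintype_le bad
      _ ≤ Fintype.card T * (2 * exp (-(2 * ρ ^ 2 * n / (b - a) ^ 2))) := by
        simpa only [Finset.card_univ, nsmul_eq_mul] using
          Finset.sum_le_card_nsmul Finset.univ _ _ fun t _ ↦ hbad t
      _ < 1 := hcard
  obtain ⟨c, hc⟩ : ∃ c, c ∉ ⋃ t, bad t := by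
    by_contra! hall
    rw [eq_univ_of_forall hall, probReal_univ] at hunion
    exact lt_irrefl _ hunion
  exact ⟨c, fun t ↦ not_le.mp fun ht ↦ hc (mem_iUnion_of_mem t ht)⟩

end Concentration

section Columns

open MeasureTheory ProbabilityTheory

variable {ι κ X Y : Type*}

theorem IsDist.exists_measure [Fintype X] [MeasurableSpace X] [MeasurableSingletonClass X]
    {P : X → ℝ} (hP : IsDist P) :
    ∃ μ : Measure X, IsProbabilityMeasure μ ∧ ∀ a, μ.real {a} = P a := by
  have hsum : ∑ a, ENNReal.ofReal (P a) = 1 := by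
    rw [← ENNReal.ofReal_sum_of_nonneg fun a _ ↦ hP.1 a, hP.2, ENNReal.ofReal_one]
  refine ⟨(PMF.ofFintype _ hsum).toMeasure, inferInstance, fun a ↦ ?_⟩
  rw [measureReal_def, PMF.toMeasure_apply_singleton _ _ (measurableSet_singleton a),
    PMF.ofFintype_apply, ENNReal.toReal_ofReal (hP.1 a)]

/-- The event that a column has letter `a` at index `i` and letter `b` at index `j`. The case
`i = j`, `a = b` is the event about a single index. -/
def twoPointCylinder (i j : ι) (a b : X) : Set (ι → X) := {u | u i = a ∧ u j = b}

variable [MeasurableSpace X] [MeasurableSingletonClass X]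

theorem measurableSet_twoPointCylinder (i j : ι) (a b : X) :
    MeasurableSet (twoPointCylinder i j a b) :=
  (measurable_pi_apply (X := fun _ : ι ↦ X) i (measurableSet_singleton a)).inter
    (measurable_pi_apply (X := fun _ : ι ↦ X) j (measurableSet_singleton b))

variable [Fintype ι] (μ : Measure X) [IsProbabilityMeasure μ]

theorem measureReal_pi_twoPointCylinder_self (i : ι) (a : X) :
    (Measure.pi fun _ : ι ↦ μ).real (twoPointCylinder i i a a) = μ.real {a} := by
  simp only [twoPointCylinder, and_self]
  exact (measurePreserving_eval (fun _ : ι ↦ μ) i).measureReal_preimage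
    (measurableSet_singleton a).nullMeasurableSet

theorem measureReal_pi_twoPointCylinder_of_ne {i j : ι} (hij : i ≠ j) (a b : X) :
    (Measure.pi fun _ : ι ↦ μ).real (twoPointCylinder i j a b) = μ.real {a} * μ.real {b} := by
  have hindep := (iIndepFun_pi (μ := fun _ : ι ↦ μ) fun _ ↦ aemeasurable_id).indepFun hij
  have hinter := hindep.measure_inter_preimage_eq_mul {a} {b}
    (measurableSet_singleton a) (measurableSet_singleton b)
  rw [← measureReal_pi_twoPointCylinder_self μ i a, ← measureReal_pi_twoPointCylinder_self μ j b]
  simp only [measureReal_def, ← ENNReal.toReal_mul, twoPointCylinder, and_self]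
  exact congrArg ENNReal.toReal hinter

theorem exists_forall_abs_sum_indicator_twoPointCylinder_sub_lt
    [Fintype κ] [Fintype X] [Fintype Y] [MeasurableSpace Y] [MeasurableSingletonClass Y]
    (ν : Measure Y) [IsProbabilityMeasure ν]
    {n : ℕ} {ρ : ℝ} (hρ : 0 ≤ ρ)
    (hcard : ((Fintype.card ι * Fintype.card X) ^ 2 * (Fintype.card κ * Fintype.card Y) ^ 2 : ℝ) *
      (2 * Real.exp (-(2 * ρ ^ 2 * n))) < 1) :
    ∃ c : Fin n → (ι → X) × (κ → Y), ∀ i i' a a' j j' b b',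
      |∑ k, (twoPointCylinder i i' a a' ×ˢ twoPointCylinder j j' b b').indicator 1 (c k) -
        n * ((Measure.pi fun _ : ι ↦ μ).real (twoPointCylinder i i' a a') *
          (Measure.pi fun _ : κ ↦ ν).real (twoPointCylinder j j' b b'))| < n * ρ := by
  let event (t : (ι × ι × X × X) × (κ × κ × Y × Y)) : Set ((ι → X) × (κ → Y)) :=
    twoPointCylinder t.1.1 t.1.2.1 t.1.2.2.1 t.1.2.2.2 ×ˢ
      twoPointCylinder t.2.1 t.2.2.1 t.2.2.2.1 t.2.2.2.2
  have hevent t : MeasurableSet (event t) :=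
    (measurableSet_twoPointCylinder ..).prod (measurableSet_twoPointCylinder ..)
  have hevents : Fintype.card ((ι × ι × X × X) × (κ × κ × Y × Y)) *
      (2 * Real.exp (-(2 * ρ ^ 2 * n / (1 - 0) ^ 2))) < 1 := by
    convert! hcard using 2
    · simp only [Fintype.card_prod]
      push_cast
      ring
    · norm_num
  obtain ⟨c, hc⟩ := exists_forall_abs_sum_sub_mul_integral_lt
    ((Measure.pi fun _ : ι ↦ μ).prod (Measure.pi fun _ : κ ↦ ν))
    (f := fun t ↦ (event t).indicator 1) (a := 0) (b := 1)
    (fun t ↦ (measurable_one.indicator (hevent t)).aemeasurable)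
    (fun t ↦ .of_forall fun u ↦ ⟨Set.indicator_nonneg (fun _ _ ↦ zero_le_one) u,
      Set.indicator_le_self' (fun _ _ ↦ zero_le_one) u⟩) hρ hevents
  refine ⟨c, fun i i' a a' j j' b b' ↦ ?_⟩
  have h := hc ((i, i', a, a'), (j, j', b, b'))
  rwa [integral_indicator_one (hevent _), measureReal_prod_prod] at h

end Columns

section RandomCode

open MeasureTheory

variable {ι κ X₁ X₂ : Type*} [DecidableEq X₁] [DecidableEq X₂]

theorem abs_sub_typeOf_lt {Ω Z : Type*} [DecidableEq Z] {n : ℕ} {c : Fin n → Ω} {S : Set Ω}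
    {v : Fin n → Z} {z : Z} (hS : ∀ k, c k ∈ S ↔ v k = z) {p ρ : ℝ}
    (h : |∑ k, S.indicator 1 (c k) - n * p| < n * ρ) :
    |p - typeOf v z| < ρ := by
  have hn : (0 : ℝ) < n := by
    rcases n.eq_zero_or_pos with rfl | hn
    · simp at h
    · exact_mod_cast hn
  have hsum : ∑ k, S.indicator (1 : Ω → ℝ) (c k) = n * typeOf v z := by
    classical
    simp only [typeOf, Set.indicator_apply, hS, Pi.one_apply, Finset.sum_boole]
    field_simp
  rw [hsum, ← mul_sub, abs_mul, abs_of_pos hn, abs_sub_comm] at h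
  exact lt_of_mul_lt_mul_left h hn.le

/-- All joint types of two distinct codewords of one code together with one or two distinct
codewords of the other are within `ρ`, in the sup distance, of the product distribution. -/
structure JointTypesNearProduct (P₁ : X₁ → ℝ) (P₂ : X₂ → ℝ) (ρ : ℝ) {n : ℕ}
    (x : ι → Fin n → X₁) (y : κ → Fin n → X₂) : Prop where
  two_two : ∀ i₁ i₂, i₁ ≠ i₂ → ∀ j₁ j₂, j₁ ≠ j₂ → ∀ z : X₁ × X₁ × X₂ × X₂,
    |P₁ z.1 * P₁ z.2.1 * P₂ z.2.2.1 * P₂ z.2.2.2 -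
      typeOf (fun k ↦ (x i₁ k, x i₂ k, y j₁ k, y j₂ k)) z| < ρ
  two_one : ∀ i₁ i₂, i₁ ≠ i₂ → ∀ j, ∀ z : X₁ × X₁ × X₂,
    |P₁ z.1 * P₁ z.2.1 * P₂ z.2.2 - typeOf (fun k ↦ (x i₁ k, x i₂ k, y j k)) z| < ρ
  one_two : ∀ i, ∀ j₁ j₂, j₁ ≠ j₂ → ∀ z : X₁ × X₂ × X₂,
    |P₁ z.1 * P₂ z.2.1 * P₂ z.2.2 - typeOf (fun k ↦ (x i k, y j₁ k, y j₂ k)) z| < ρ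

variable [Fintype ι] [Fintype κ] [Fintype X₁] [Fintype X₂]

theorem IsDist.exists_jointTypesNearProduct {P₁ : X₁ → ℝ} {P₂ : X₂ → ℝ}
    (hP₁ : IsDist P₁) (hP₂ : IsDist P₂) {n : ℕ} {ρ : ℝ} (hρ : 0 ≤ ρ)
    (hcard : ((Fintype.card ι * Fintype.card X₁) ^ 2 * (Fintype.card κ * Fintype.card X₂) ^ 2 : ℝ) *
      (2 * Real.exp (-(2 * ρ ^ 2 * n))) < 1) :
    ∃ (x : ι → Fin n → X₁) (y : κ → Fin n → X₂), JointTypesNearProduct P₁ P₂ ρ x y := by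
  let _ : MeasurableSpace X₁ := ⊤
  let _ : MeasurableSpace X₂ := ⊤
  obtain ⟨μ₁, _, hμ₁⟩ := hP₁.exists_measure
  obtain ⟨μ₂, _, hμ₂⟩ := hP₂.exists_measure
  obtain ⟨c, hc⟩ := exists_forall_abs_sum_indicator_twoPointCylinder_sub_lt
    (ι := ι) (κ := κ) μ₁ μ₂ hρ hcard
  refine ⟨fun i k ↦ (c k).1 i, fun j k ↦ (c k).2 j, ?_, ?_, ?_⟩
  · rintro i₁ i₂ hi j₁ j₂ hj ⟨a₁, a₂, b₁, b₂⟩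
    have h := hc i₁ i₂ a₁ a₂ j₁ j₂ b₁ b₂
    rw [measureReal_pi_twoPointCylinder_of_ne _ hi, measureReal_pi_twoPointCylinder_of_ne _ hj,
      hμ₁, hμ₁, hμ₂, hμ₂] at h
    refine abs_sub_typeOf_lt (fun k ↦ ?_) (by simpa only [mul_assoc] using h)
    simp only [twoPointCylinder, Set.mem_prod, Set.mem_ofPred_eq, Prod.mk.injEq, and_assoc]
  · rintro i₁ i₂ hi j ⟨a₁, a₂, b⟩
    have h := hc i₁ i₂ a₁ a₂ j j b b
    rw [measureReal_pi_twoPointCylinder_of_ne _ hi, measureReal_pi_twoPointCylinder_self,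
      hμ₁, hμ₁, hμ₂] at h
    refine abs_sub_typeOf_lt (fun k ↦ ?_) h
    simp only [twoPointCylinder, Set.mem_prod, Set.mem_ofPred_eq, Prod.mk.injEq, and_assoc,
      and_self]
  · rintro i j₁ j₂ hj ⟨a, b₁, b₂⟩
    have h := hc i i a a j₁ j₂ b₁ b₂
    rw [measureReal_pi_twoPointCylinder_self, measureReal_pi_twoPointCylinder_of_ne _ hj,
      hμ₁, hμ₂, hμ₂] at h
    refine abs_sub_typeOf_lt (fun k ↦ ?_) (by simpa only [mul_assoc] using h)
    simp only [twoPointCylinder, Set.mem_prod, Set.mem_ofPred_eq, Prod.mk.injEq, and_self]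

end RandomCode

section Rate

open Filter Real Topology

theorem exists_rate_tendsto_natCeil_rpow_pow_mul_exp_neg (d : ℕ) {c : ℝ} (hc : 0 < c) :
    ∃ R > (0 : ℝ), Tendsto (fun n : ℕ ↦ (⌈(2 : ℝ) ^ (R * n)⌉₊ : ℝ) ^ d * exp (-(c * n)))
      atTop (𝓝 0) := by
  have hlog : 0 < log 2 := log_pos one_lt_two
  let R : ℝ := c / ((d + 1) * log 2)
  have hR : 0 < R := div_pos hc (mul_pos (by positivity) hlog)
  have hceil (n : ℕ) : (⌈(2 : ℝ) ^ (R * n)⌉₊ : ℝ) ≤ 2 * 2 ^ (R * n) := by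
    refine Nat.ceil_le_two_mul ?_
    have : (1 : ℝ) ≤ 2 ^ (R * n) := one_le_rpow one_le_two (by positivity)
    linarith
  have hexp (n : ℕ) : ((2 : ℝ) ^ (R * n)) ^ d * exp (-(c * n)) = exp (-(c / (d + 1) * n)) := by
    rw [rpow_def_of_pos two_pos, ← exp_nat_mul, ← exp_add]
    congr 1
    simp only [R]
    field_simp
    ring
  have hlim : Tendsto (fun n : ℕ ↦ 2 ^ d * exp (-(c / (d + 1) * n))) atTop (𝓝 0) := by
    have hlin : Tendsto (fun n : ℕ ↦ c / (d + 1) * (n : ℝ)) atTop atTop :=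
      tendsto_natCast_atTop_atTop.const_mul_atTop (by positivity)
    simpa using (tendsto_exp_neg_atTop_nhds_zero.comp hlin).const_mul (2 ^ d)
  refine ⟨R, hR, squeeze_zero (fun n ↦ by positivity) (fun n ↦ ?_) hlim⟩
  calc (⌈(2 : ℝ) ^ (R * n)⌉₊ : ℝ) ^ d * exp (-(c * n))
      ≤ (2 * 2 ^ (R * n)) ^ d * exp (-(c * n)) := by gcongr; exact hceil n
    _ = 2 ^ d * exp (-(c / (d + 1) * n)) := by rw [mul_pow, mul_assoc, hexp]

end Rate

theorem stmt_19 (X₁ X₂ : Type*) [Fintype X₁] [DecidableEq X₁] [Fintype X₂] [DecidableEq X₂]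
    (ρ₁₂ ρ₁ ρ₂ : ℝ) (hρ₁₂ : 0 < ρ₁₂) (hρ₁ : 0 < ρ₁) (hρ₂ : 0 < ρ₂) :
    ∃ (R₁ R₂ : ℝ) (n₀ : ℕ), 0 < R₁ ∧ 0 < R₂ ∧
      ∀ (P₁ : X₁ → ℝ) (P₂ : X₂ → ℝ), IsDist P₁ → IsDist P₂ →
      ∀ (K12 : Set (X₁ × X₁ × X₂ × X₂ → ℝ)) (K1 : Set (X₁ × X₁ × X₂ → ℝ))
        (K2 : Set (X₁ × X₂ × X₂ → ℝ)),
        (∀ D ∈ K12, ∃ z : X₁ × X₁ × X₂ × X₂,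
          ρ₁₂ ≤ |P₁ z.1 * P₁ z.2.1 * P₂ z.2.2.1 * P₂ z.2.2.2 - D z|) →
        (∀ D ∈ K1, ∃ z : X₁ × X₁ × X₂,
          ρ₁ ≤ |P₁ z.1 * P₁ z.2.1 * P₂ z.2.2 - D z|) →
        (∀ D ∈ K2, ∃ z : X₁ × X₂ × X₂,
          ρ₂ ≤ |P₁ z.1 * P₂ z.2.1 * P₂ z.2.2 - D z|) →
        ∀ n : ℕ, n₀ ≤ n →
          ∃ (M₁ M₂ : ℕ) (x : Fin M₁ → Fin n → X₁) (y : Fin M₂ → Fin n → X₂),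
            (2 : ℝ) ^ (R₁ * (n : ℝ)) ≤ (M₁ : ℝ) ∧
            (2 : ℝ) ^ (R₂ * (n : ℝ)) ≤ (M₂ : ℝ) ∧
            (∀ i₁ i₂ : Fin M₁, i₁ ≠ i₂ → ∀ j₁ j₂ : Fin M₂, j₁ ≠ j₂ →
              typeOf (fun k => (x i₁ k, x i₂ k, y j₁ k, y j₂ k)) ∉ K12) ∧
            (∀ i₁ i₂ : Fin M₁, i₁ ≠ i₂ → ∀ j : Fin M₂,
              typeOf (fun k => (x i₁ k, x i₂ k, y j k)) ∉ K1) ∧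
            (∀ i : Fin M₁, ∀ j₁ j₂ : Fin M₂, j₁ ≠ j₂ →
              typeOf (fun k => (x i k, y j₁ k, y j₂ k)) ∉ K2) := by
  let ρ := min ρ₁₂ (min ρ₁ ρ₂)
  have hρ : 0 < ρ := lt_min hρ₁₂ (lt_min hρ₁ hρ₂)
  have hρ_le₁₂ : ρ ≤ ρ₁₂ := min_le_left _ _
  have hρ_le₁ : ρ ≤ ρ₁ := (min_le_right _ _).trans (min_le_left _ _)
  have hρ_le₂ : ρ ≤ ρ₂ := (min_le_right _ _).trans (min_le_right _ _)
  obtain ⟨R, hR, hlim⟩ := exists_rate_tendsto_natCeil_rpow_pow_mul_exp_neg 4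
    (c := 2 * ρ ^ 2) (by positivity)
  have hlim' := hlim.const_mul (2 * (Fintype.card X₁ * Fintype.card X₂ : ℝ) ^ 2)
  rw [mul_zero] at hlim'
  obtain ⟨n₀, hn₀⟩ := Filter.eventually_atTop.mp (hlim'.eventually_lt_const one_pos)
  refine ⟨R, R, n₀, hR, hR, fun P₁ P₂ hP₁ hP₂ K12 K1 K2 hK12 hK1 hK2 n hn ↦ ?_⟩
  let M := ⌈(2 : ℝ) ^ (R * n)⌉₊
  obtain ⟨x, y, hxy⟩ := hP₁.exists_jointTypesNearProduct (ι := Fin M) (κ := Fin M) hP₂ hρ.le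
    (n := n) (by simp only [Fintype.card_fin]; linarith [hn₀ n hn])
  refine ⟨M, M, x, y, Nat.le_ceil _, Nat.le_ceil _, fun i₁ i₂ hi j₁ j₂ hj hmem ↦ ?_,
    fun i₁ i₂ hi j hmem ↦ ?_, fun i j₁ j₂ hj hmem ↦ ?_⟩
  · obtain ⟨z, hz⟩ := hK12 _ hmem
    exact (hρ_le₁₂.trans hz).not_gt (hxy.two_two i₁ i₂ hi j₁ j₂ hj z)
  · obtain ⟨z, hz⟩ := hK1 _ hmem
    exact (hρ_le₁.trans hz).not_gt (hxy.two_one i₁ i₂ hi j z)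
  · obtain ⟨z, hz⟩ := hK2 _ hmem
    exact (hρ_le₂.trans hz).not_gt (hxy.one_two i j₁ j₂ hj z)
end
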